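/- Let n, s be positive integers with s ≤ n, U ∈ ℂ^{n×s} with U†U = I_s, P_x > 0, γ > 0, K = (P_x/s) U U†, σ²_{x_t} = [K]_{tt}, and let energy arrivals E_1,…,E_n ≥ 0 be given with E_tot = Σ_l E_l > 0. Suppose (1/P_x) Σ_{l=1}^t σ²_{x_l} ≤ (1/E_tot) Σ_{l=1}^t E_l for every t = 1,…,n. Then the uniform allocation a_t = E_tot/P_x satisfies the energy causality constraints Σ_{l=1}^t a_l σ²_{x_l} ≤ Σ_{l=1}^t E_l for all t and Σ_{l=1}^n a_l σ²_{x_l} = E_tot, and it minimizes the error: for every a' with a'_t ≥ 0 satisfying these constraints, tr[((s/P_x) I_s + γ U† diag(a'_t) U)⁻¹] ≥ tr[((s/P_x) I_s + γ U† diag(a_t) U)⁻¹] = P_x / (1 + γ E_tot/s). -/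

import Mathlib

open Matrix
open scoped ComplexOrder

/-- Tangent-line bound for the trace of the inverse of a positive definite matrix. -/
lemma Matrix.PosDef.tangent_le_trace_inv {ι : Type*} [Fintype ι] [DecidableEq ι]
    {M : Matrix ι ι ℂ} (hM : M.PosDef) (c : ℝ) :
    2 * (c : ℂ) * (Fintype.card ι : ℂ) - (c : ℂ) ^ 2 * M.trace ≤ M⁻¹.trace := by
  have hdet : IsUnit M.det := (Matrix.isUnit_iff_isUnit_det M).mp hM.isUnit
  have hB : (M⁻¹ - (c : ℂ) • (1 : Matrix ι ι ℂ))ᴴ = M⁻¹ - (c : ℂ) • (1 : Matrix ι ι ℂ) := by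
    rw [conjTranspose_sub, hM.inv.isHermitian.eq, conjTranspose_smul, conjTranspose_one]
    simp
  have hpsd := (hM.posSemidef.conjTranspose_mul_mul_same
    (M⁻¹ - (c : ℂ) • (1 : Matrix ι ι ℂ))).trace_nonneg
  have hexp : (M⁻¹ - (c : ℂ) • (1 : Matrix ι ι ℂ))ᴴ * M * (M⁻¹ - (c : ℂ) • (1 : Matrix ι ι ℂ))
      = M⁻¹ - (2 * (c : ℂ)) • (1 : Matrix ι ι ℂ) + ((c : ℂ) ^ 2) • M := by
    rw [hB]
    simp only [sub_mul, mul_sub, smul_mul_assoc, mul_smul_comm, one_mul, mul_one,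
      Matrix.nonsing_inv_mul M hdet, Matrix.mul_nonsing_inv M hdet]
    module
  rw [hexp, trace_add, trace_sub, trace_smul, trace_smul, trace_one, smul_eq_mul,
    smul_eq_mul] at hpsd
  rw [← sub_nonneg]
  convert hpsd using 1
  ring

lemma Matrix.trace_conjTranspose_mul_diagonal_mul {m ι : Type*} [Fintype m] [DecidableEq m]
    [Fintype ι] (U : Matrix m ι ℂ) (a : m → ℝ) :
    (Uᴴ * diagonal (fun t => (a t : ℂ)) * U).trace
      = ((∑ t, a t * ∑ k, ‖U t k‖ ^ 2 : ℝ) : ℂ) := by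
  rw [Matrix.trace_mul_comm, ← Matrix.mul_assoc, Matrix.trace]
  push_cast
  refine Finset.sum_congr rfl fun t _ => ?_
  rw [diag_apply, mul_diagonal, mul_apply, mul_comm]
  congr 1
  refine Finset.sum_congr rfl fun k _ => ?_
  rw [conjTranspose_apply]
  exact Complex.mul_conj' (U t k)

/-- An isometry has squared Frobenius norm equal to the dimension of its domain. -/
lemma Matrix.sum_norm_sq_of_conjTranspose_mul_self {m ι : Type*} [Fintype m] [DecidableEq m]
    [Fintype ι] [DecidableEq ι] {U : Matrix m ι ℂ} (hU : Uᴴ * U = 1) :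
    ∑ t, ∑ k, ‖U t k‖ ^ 2 = (Fintype.card ι : ℝ) := by
  have h := trace_conjTranspose_mul_diagonal_mul U (fun _ => 1)
  simp only [Complex.ofReal_one, diagonal_one, Matrix.mul_one, hU, trace_one, one_mul] at h
  exact_mod_cast h.symm

/-- paper's Corollary 2: for the flat-spectrum low-rank source
`K = (P_x/s) U U†` over a static channel, if
`(1/P_x) Σ_{l≤t} σ²_{x_l} ≤ (1/E_tot) Σ_{l≤t} E_l` for every `t`, then the
uniform allocation `a_t = E_tot/P_x` satisfies the energy causality
constraints and minimizes the MMSE, attaining `P_x / (1 + γ E_tot/s)`. -/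
theorem stmt8 (n s : ℕ) (hn : 0 < n) (hs : 0 < s) (hsn : s ≤ n)
    (U : Matrix (Fin n) (Fin s) ℂ) (hU : Uᴴ * U = 1)
    (Px γ : ℝ) (hPx : 0 < Px) (hγ : 0 < γ)
    (σx2 : Fin n → ℝ) (hσx2 : ∀ t, σx2 t = (Px / s) * ∑ k, ‖U t k‖ ^ 2)
    (E : Fin n → ℝ) (hE : ∀ t, 0 ≤ E t)
    (Etot : ℝ) (hEtot : Etot = ∑ l, E l) (hEtotpos : 0 < Etot)
    (hcond : ∀ t : Fin n,
      (1 / Px) * ∑ l ∈ Finset.Iic t, σx2 l ≤ (1 / Etot) * ∑ l ∈ Finset.Iic t, E l) :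
    (∀ t : Fin n, ∑ l ∈ Finset.Iic t, (Etot / Px) * σx2 l ≤ ∑ l ∈ Finset.Iic t, E l)
    ∧ (∑ l : Fin n, (Etot / Px) * σx2 l = Etot)
    ∧ (∀ a' : Fin n → ℝ, (∀ t, 0 ≤ a' t) →
        (∀ t : Fin n, ∑ l ∈ Finset.Iic t, a' l * σx2 l ≤ ∑ l ∈ Finset.Iic t, E l) →
        (∑ l, a' l * σx2 l = Etot) →
        Matrix.trace
            ((((s : ℝ) / Px : ℝ) • (1 : Matrix (Fin s) (Fin s) ℂ)
                + (γ : ℂ) • (Uᴴ * Matrix.diagonal (fun _ : Fin n => ((Etot / Px : ℝ) : ℂ)) * U))⁻¹)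
          ≤ Matrix.trace
              ((((s : ℝ) / Px : ℝ) • (1 : Matrix (Fin s) (Fin s) ℂ)
                  + (γ : ℂ) • (Uᴴ * Matrix.diagonal (fun t => (a' t : ℂ)) * U))⁻¹))
    ∧ Matrix.trace
          ((((s : ℝ) / Px : ℝ) • (1 : Matrix (Fin s) (Fin s) ℂ)
              + (γ : ℂ) • (Uᴴ * Matrix.diagonal (fun _ : Fin n => ((Etot / Px : ℝ) : ℂ)) * U))⁻¹)
        = ((Px / (1 + γ * Etot / s) : ℝ) : ℂ) := by
  have hs' : (0 : ℝ) < s := Nat.cast_pos.mpr hs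
  have hsum : ∑ t, ∑ k, ‖U t k‖ ^ 2 = (s : ℝ) := by
    simpa using sum_norm_sq_of_conjTranspose_mul_self hU
  have hd : 0 < ((s : ℝ) + γ * Etot) / Px := by positivity
  have hunif : (((s : ℝ) / Px : ℝ) • (1 : Matrix (Fin s) (Fin s) ℂ)
      + (γ : ℂ) • (Uᴴ * Matrix.diagonal (fun _ : Fin n => ((Etot / Px : ℝ) : ℂ)) * U))
      = ((((s : ℝ) + γ * Etot) / Px : ℝ) : ℂ) • (1 : Matrix (Fin s) (Fin s) ℂ) := by
    have hdiag : Matrix.diagonal (fun _ : Fin n => ((Etot / Px : ℝ) : ℂ))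
        = ((Etot / Px : ℝ) : ℂ) • (1 : Matrix (Fin n) (Fin n) ℂ) :=
      (smul_one_eq_diagonal _).symm
    rw [hdiag, Matrix.mul_smul, Matrix.mul_one, Matrix.smul_mul, hU, smul_smul,
      ← Complex.coe_smul, ← add_smul]
    congr 1
    push_cast
    ring
  have hval : Matrix.trace
      ((((s : ℝ) / Px : ℝ) • (1 : Matrix (Fin s) (Fin s) ℂ)
        + (γ : ℂ) • (Uᴴ * Matrix.diagonal (fun _ : Fin n => ((Etot / Px : ℝ) : ℂ)) * U))⁻¹)
      = ((Px / (1 + γ * Etot / s) : ℝ) : ℂ) := by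
    have hinv : (((((s : ℝ) + γ * Etot) / Px : ℝ) : ℂ) • (1 : Matrix (Fin s) (Fin s) ℂ))⁻¹
        = (((((s : ℝ) + γ * Etot) / Px)⁻¹ : ℝ) : ℂ) • (1 : Matrix (Fin s) (Fin s) ℂ) := by
      apply Matrix.inv_eq_right_inv
      rw [smul_mul_smul_comm, Matrix.mul_one, ← Complex.ofReal_mul, mul_inv_cancel₀ hd.ne',
        Complex.ofReal_one, one_smul]
    rw [hunif, hinv, trace_smul, trace_one, Fintype.card_fin, smul_eq_mul,
      ← Complex.ofReal_natCast, ← Complex.ofReal_mul]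
    congr 1
    field_simp
  refine ⟨fun t => ?_, ?_, fun a' ha' _ htot => ?_, hval⟩
  · have h := mul_le_mul_of_nonneg_left (hcond t) hEtotpos.le
    rw [← Finset.mul_sum]
    calc Etot / Px * ∑ l ∈ Finset.Iic t, σx2 l
        = Etot * (1 / Px * ∑ l ∈ Finset.Iic t, σx2 l) := by ring
      _ ≤ Etot * (1 / Etot * ∑ l ∈ Finset.Iic t, E l) := h
      _ = ∑ l ∈ Finset.Iic t, E l := by field_simp
  · simp only [hσx2, ← Finset.mul_sum, hsum]
    field_simp
  · rw [hval]
    have hpos : (((s : ℝ) / Px : ℝ) • (1 : Matrix (Fin s) (Fin s) ℂ)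
        + (γ : ℂ) • (Uᴴ * Matrix.diagonal (fun t => (a' t : ℂ)) * U)).PosDef := by
      refine PosDef.add_posSemidef ?_ ?_
      · exact PosDef.one.smul (div_pos hs' hPx)
      · refine PosSemidef.smul ?_ (Complex.zero_le_real.mpr hγ.le)
        refine PosSemidef.conjTranspose_mul_mul_same (PosSemidef.diagonal fun t => ?_) U
        exact Complex.zero_le_real.mpr (ha' t)
    have hweights : ∑ t, a' t * ∑ k, ‖U t k‖ ^ 2 = s * Etot / Px := by
      rw [← htot, Finset.mul_sum, Finset.sum_div]
      refine Finset.sum_congr rfl fun t _ => ?_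
      rw [hσx2]
      field_simp
    refine le_trans (le_of_eq ?_)
      (hpos.tangent_le_trace_inv (((s : ℝ) + γ * Etot) / Px)⁻¹)
    rw [trace_add, trace_smul, trace_smul, trace_conjTranspose_mul_diagonal_mul, hweights,
      trace_one, Fintype.card_fin, Complex.real_smul, smul_eq_mul]
    norm_cast
    field_simp
    ring
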